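/- Equality of the score-function (REINFORCE) and reparameterization gradients. Under the stated domination hypotheses, for every φ₀ ∈ I the map φ ↦ ∫ f(z)·q(φ, z) dz is differentiable at φ₀ and ∫ f(z)·∂φq(φ, z)|_{φ=φ₀} dz = ∫ f′(T(φ₀, ε))·∂φT(φ, ε)|_{φ=φ₀} dμ(ε), both sides being equal to (d/dφ)|_{φ=φ₀} ∫ f(z)·q(φ, z) dz; equivalently, E_{z∼q(φ₀,·)}[f(z)·∂φ log q(φ, z)|_{φ=φ₀}] = E_{ε∼μ}[f′(T(φ₀, ε))·∂φT(φ, ε)|_{φ=φ₀}]. -/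

import Mathlib

/-!
Since `q(φ,·)` is the density of the law of `T(φ,·)` under `μ`, change of variables gives
`∫ f(z) q(φ,z) dz = ∫ f(T(φ,ε)) dμ(ε)` for every `φ`. Both sides may be differentiated under the
integral sign, the first with dominating function `G` and the second with dominating function `H`
(`hasDerivAt_integral_of_dominated_of_measurable`), and the two resulting derivatives agree by
uniqueness. The log-derivative form follows pointwise from `q · ∂φ log q = ∂φ q`, as `q > 0`.
-/


open MeasureTheory

/-- A derivative in the parameter is an a.e. limit of difference quotients along a sequence, so it
inherits a.e. strong measurability in the integration variable. -/
lemma aestronglyMeasurable_of_ae_hasDerivAt {ν : Measure ℝ} {F : ℝ → ℝ → ℝ} {F' : ℝ → ℝ} {x₀ : ℝ}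
    (hF : ∀ x, AEStronglyMeasurable (F x) ν)
    (hF' : ∀ᵐ y ∂ν, HasDerivAt (fun x => F x y) (F' y) x₀) :
    AEStronglyMeasurable F' ν := by
  have hu : Filter.Tendsto (fun n : ℕ => 1 / ((n : ℝ) + 1)) Filter.atTop (nhdsWithin 0 {0}ᶜ) := by
    refine tendsto_nhdsWithin_iff.2 ⟨tendsto_one_div_add_atTop_nhds_zero_nat, ?_⟩
    exact Filter.Eventually.of_forall fun n => (Nat.one_div_pos_of_nat (α := ℝ)).ne'
  refine aestronglyMeasurable_of_tendsto_ae Filter.atTop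
    (f := fun (n : ℕ) y => (1 / ((n : ℝ) + 1))⁻¹ • (F (x₀ + 1 / ((n : ℝ) + 1)) y - F x₀ y))
    (fun n => ((hF (x₀ + 1 / ((n : ℝ) + 1))).sub (hF x₀)).const_smul (1 / ((n : ℝ) + 1))⁻¹) ?_
  filter_upwards [hF'] with y hy
  exact (hasDerivAt_iff_tendsto_slope_zero.1 hy).comp hu

/-- Differentiation under the integral sign, where measurability of the derivative is deduced
instead of assumed. -/
lemma hasDerivAt_integral_of_dominated_of_measurable {ν : Measure ℝ} {F F' : ℝ → ℝ → ℝ}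
    {B : ℝ → ℝ} {a b x₀ : ℝ} (hx₀ : x₀ ∈ Set.Ioo a b) (hF : ∀ x, Integrable (F x) ν)
    (hF' : ∀ᵐ y ∂ν, ∀ x, HasDerivAt (fun x => F x y) (F' x y) x)
    (hB : Integrable B ν) (hbound : ∀ᵐ y ∂ν, ∀ x ∈ Set.Ioo a b, |F' x y| ≤ B y) :
    HasDerivAt (fun x => ∫ y, F x y ∂ν) (∫ y, F' x₀ y ∂ν) x₀ :=
  (hasDerivAt_integral_of_dominated_loc_of_deriv_le (Ioo_mem_nhds hx₀.1 hx₀.2)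
    (Filter.Eventually.of_forall fun x => (hF x).aestronglyMeasurable) (hF x₀)
    (aestronglyMeasurable_of_ae_hasDerivAt (fun x => (hF x).aestronglyMeasurable)
      (hF'.mono fun _ hy => hy x₀))
    hbound hB (hF'.mono fun _ hy x _ => hy x)).2

/-- **Equality of the score-function (REINFORCE) and reparameterization gradients.** Under
the stated domination hypotheses on the open interval `I = (a, b)`, for every `φ₀ ∈ I` the
map `φ ↦ ∫ f(z) q(φ,z) dz` is differentiable at `φ₀` with derivative
`∫ f(z) ∂φq(φ,z)|_{φ₀} dz`, and this equals the reparameterization gradient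
`∫ f'(T(φ₀,ε)) ∂φT(φ,ε)|_{φ₀} dμ(ε)`; equivalently,
`E_{z∼q(φ₀,·)}[f(z) ∂φ log q(φ,z)|_{φ₀}] = E_{ε∼μ}[f'(T(φ₀,ε)) ∂φT(φ,ε)|_{φ₀}]`. -/
theorem score_function_eq_reparameterization_gradient
    (μ : Measure ℝ) [IsProbabilityMeasure μ]
    (T : ℝ → ℝ → ℝ) (hT_meas : Measurable (Function.uncurry T))
    (hT_diff : ∀ᵐ ε ∂μ, Differentiable ℝ (fun φ => T φ ε))
    (q : ℝ → ℝ → ℝ)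
    (hq_density : ∀ φ, Measure.map (fun ε => T φ ε) μ =
      volume.withDensity (fun z => ENNReal.ofReal (q φ z)))
    (hq_pos : ∀ φ z, 0 < q φ z)
    (hq_meas : ∀ φ, Measurable (q φ))
    (hq_diff : ∀ᵐ z ∂(volume : Measure ℝ), Differentiable ℝ (fun φ => q φ z))
    (f : ℝ → ℝ) (hf_diff : Differentiable ℝ f)
    (hfT_int : ∀ φ, Integrable (fun ε => f (T φ ε)) μ)
    (hfq_int : ∀ φ, Integrable (fun z => f z * q φ z) (volume : Measure ℝ))
    (a b : ℝ)
    (G : ℝ → ℝ) (hG_int : Integrable G (volume : Measure ℝ))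
    (hG_bound : ∀ᵐ z ∂(volume : Measure ℝ), ∀ φ ∈ Set.Ioo a b,
      |f z * deriv (fun φ' => q φ' z) φ| ≤ G z)
    (H : ℝ → ℝ) (hH_int : Integrable H μ)
    (hH_bound : ∀ᵐ ε ∂μ, ∀ φ ∈ Set.Ioo a b,
      |deriv f (T φ ε) * deriv (fun φ' => T φ' ε) φ| ≤ H ε) :
    ∀ φ₀ ∈ Set.Ioo a b,
      HasDerivAt (fun φ => ∫ z, f z * q φ z)
        (∫ z, f z * deriv (fun φ => q φ z) φ₀) φ₀ ∧
      (∫ z, f z * deriv (fun φ => q φ z) φ₀) =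
        ∫ ε, deriv f (T φ₀ ε) * deriv (fun φ => T φ ε) φ₀ ∂μ ∧
      (∫ z, f z * deriv (fun φ => Real.log (q φ z)) φ₀ * q φ₀ z) =
        ∫ ε, deriv f (T φ₀ ε) * deriv (fun φ => T φ ε) φ₀ ∂μ := by
  intro φ₀ hφ₀
  have hscore : HasDerivAt (fun φ => ∫ z, f z * q φ z)
      (∫ z, f z * deriv (fun φ => q φ z) φ₀) φ₀ := by
    refine hasDerivAt_integral_of_dominated_of_measurable
      (F' := fun φ z => f z * deriv (fun φ' => q φ' z) φ) hφ₀ hfq_int ?_ hG_int hG_bound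
    filter_upwards [hq_diff] with z hz φ
    exact (hz φ).hasDerivAt.const_mul (f z)
  have hreparam : HasDerivAt (fun φ => ∫ ε, f (T φ ε) ∂μ)
      (∫ ε, deriv f (T φ₀ ε) * deriv (fun φ => T φ ε) φ₀ ∂μ) φ₀ := by
    refine hasDerivAt_integral_of_dominated_of_measurable
      (F' := fun φ ε => deriv f (T φ ε) * deriv (fun φ' => T φ' ε) φ) hφ₀ hfT_int ?_ hH_int hH_bound
    filter_upwards [hT_diff] with ε hε φ
    exact (hf_diff (T φ ε)).hasDerivAt.comp φ (hε φ).hasDerivAt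
  have hchange : (fun φ => ∫ z, f z * q φ z) = fun φ => ∫ ε, f (T φ ε) ∂μ := by
    funext φ
    have hTφ : Measurable (fun ε => T φ ε) := hT_meas.comp measurable_prodMk_left
    rw [← integral_map hTφ.aemeasurable hf_diff.continuous.aestronglyMeasurable, hq_density φ,
      integral_withDensity_eq_integral_toReal_smul (hq_meas φ).ennreal_ofReal
        (Filter.Eventually.of_forall fun _ => ENNReal.ofReal_lt_top)]
    refine integral_congr_ae (Filter.Eventually.of_forall fun z => ?_)
    simp only [ENNReal.toReal_ofReal (hq_pos φ z).le, smul_eq_mul, mul_comm]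
  have heq : (∫ z, f z * deriv (fun φ => q φ z) φ₀) =
      ∫ ε, deriv f (T φ₀ ε) * deriv (fun φ => T φ ε) φ₀ ∂μ :=
    (hchange ▸ hscore).unique hreparam
  refine ⟨hscore, heq, heq ▸ integral_congr_ae ?_⟩
  filter_upwards [hq_diff] with z hz
  have hne : q φ₀ z ≠ 0 := (hq_pos φ₀ z).ne'
  rw [((hz φ₀).hasDerivAt.log hne).deriv]
  field_simp
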